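/- arXiv:2401.08475 — 2 statements merged into one kernel-verified Lean document; each statement's English description precedes it below -/
import Mathlib

section
/- Let K be a finite abstract simplicial complex, let x_i, x_{j₁}, x_{j₂} be vertices of K, let z not be a vertex of K, and let K′ = K ∪ (z*(St̄(x_{j₁}) ∪ St̄(x_{j₂}))). Let L′ = St̄_{K′}(x_i) ∪ St̄_{K′}(x_{j₁}) be the union of the closed stars of x_i and x_{j₁} taken in K′. Then every toplex (inclusion-maximal simplex) of L′ that contains x_{j₁} also contains z. -/
/-- An abstract simplicial complex: a collection of nonempty finite sets closed
under taking nonempty subsets. -/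
def IsComplex {V : Type*} (K : Set (Finset V)) : Prop :=
  (∀ σ ∈ K, σ.Nonempty) ∧ (∀ σ ∈ K, ∀ τ, τ ⊆ σ → τ.Nonempty → τ ∈ K)

/-- The closed star of a vertex `x` in a simplicial complex `K`. -/
def ClosedStar {V : Type*} (K : Set (Finset V)) (x : V) : Set (Finset V) :=
  {σ | σ ∈ K ∧ ∃ τ ∈ K, σ ⊆ τ ∧ x ∈ τ}

/-- The simplicial cone `z * L`: `L ∪ {{z}} ∪ {σ ∪ {z} : σ ∈ L}`. -/
def Cone {V : Type*} [DecidableEq V] (z : V) (L : Set (Finset V)) : Set (Finset V) :=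
  L ∪ {{z}} ∪ {τ | ∃ σ ∈ L, τ = insert z σ}

/-- A toplex of a simplicial complex: an inclusion-maximal simplex. -/
def IsToplex {V : Type*} (K : Set (Finset V)) (σ : Finset V) : Prop :=
  σ ∈ K ∧ ∀ τ ∈ K, σ ⊆ τ → σ = τ

section

variable {V : Type*} {K L : Set (Finset V)} {σ : Finset V} {x z : V}

theorem closedStar_subset (K : Set (Finset V)) (x : V) : ClosedStar K x ⊆ K :=
  fun _ hσ => hσ.1

theorem mem_closedStar_of_mem (hσ : σ ∈ K) (hx : x ∈ σ) : σ ∈ ClosedStar K x :=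
  ⟨hσ, σ, hσ, subset_rfl, hx⟩

variable [DecidableEq V]

theorem insert_mem_cone (z : V) (hσ : σ ∈ L) : insert z σ ∈ Cone z L :=
  Or.inr ⟨σ, hσ, rfl⟩

theorem mem_of_mem_cone_of_notMem (hσ : σ ∈ Cone z L) (hz : z ∉ σ) : σ ∈ L := by
  rcases hσ with (hσL | rfl) | ⟨τ, -, rfl⟩
  · exact hσL
  · exact absurd (Finset.mem_singleton_self z) hz
  · exact absurd (Finset.mem_insert_self z τ) hz

theorem IsToplex.mem_of_insert_mem (hσ : IsToplex K σ) (hz : insert z σ ∈ K) : z ∈ σ :=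
  Finset.insert_eq_self.mp (hσ.2 _ hz (Finset.subset_insert z σ)).symm

/-- If `z ∉ σ`, then `σ` is a simplex of `K` through `x`, hence lies in the base `L` of the cone,
and `insert z σ` is a strictly larger simplex of `L'`. -/
theorem toplex_of_union_star_contains_cone_vertex_general {L' : Set (Finset V)}
    (hstarL : ClosedStar K x ⊆ L) (hLK : L ⊆ K)
    (hstarL' : ClosedStar (K ∪ Cone z L) x ⊆ L') (hL'K' : L' ⊆ K ∪ Cone z L)
    (hσ : IsToplex L' σ) (hx : x ∈ σ) : z ∈ σ := by
  by_contra hz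
  have hσK : σ ∈ K :=
    (hL'K' hσ.1).elim id fun hcone => hLK (mem_of_mem_cone_of_notMem hcone hz)
  have hσL : σ ∈ L := hstarL (mem_closedStar_of_mem hσK hx)
  have hinsert : insert z σ ∈ L' :=
    hstarL' (mem_closedStar_of_mem (.inr (insert_mem_cone z hσL)) (Finset.mem_insert_of_mem hx))
  exact hz (hσ.mem_of_insert_mem hinsert)

end

/-- Let `K` be a finite abstract simplicial complex, `x_i, x_{j₁}, x_{j₂}`
vertices of `K`, `z` not a vertex of `K`, and
`K′ = K ∪ (z * (St̄(x_{j₁}) ∪ St̄(x_{j₂})))`. Let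
`L′ = St̄_{K′}(x_i) ∪ St̄_{K′}(x_{j₁})`. Then every toplex of `L′` containing `x_{j₁}`
also contains `z`. -/
theorem toplex_of_union_star_contains_cone_vertex {V : Type*} [DecidableEq V]
    (K : Set (Finset V)) (hK : IsComplex K) (hfin : K.Finite)
    (xi xj1 xj2 : V)
    (hxi : ∃ σ ∈ K, xi ∈ σ) (hxj1 : ∃ σ ∈ K, xj1 ∈ σ) (hxj2 : ∃ σ ∈ K, xj2 ∈ σ)
    (z : V) (hz : ∀ σ ∈ K, z ∉ σ) :
    ∀ σ : Finset V,
      IsToplex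
        (ClosedStar (K ∪ Cone z (ClosedStar K xj1 ∪ ClosedStar K xj2)) xi ∪
          ClosedStar (K ∪ Cone z (ClosedStar K xj1 ∪ ClosedStar K xj2)) xj1) σ →
      xj1 ∈ σ → z ∈ σ :=
  fun _ => toplex_of_union_star_contains_cone_vertex_general Set.subset_union_left
    (Set.union_subset (closedStar_subset K xj1) (closedStar_subset K xj2))
    Set.subset_union_right (Set.union_subset (closedStar_subset _ xi) (closedStar_subset _ xj1))
end

section
/- Let R ⊆ X × Y be a relation between finite sets, let x_i, x_j ∈ X be distinct, let R′ be the reduced relation obtained from R by replacing x_i and x_j with a new element z, and let x_k ∈ X \ {x_i, x_j} with R(x_k) ≠ ∅. Then: (a) if neither x_i nor x_j belongs to V(St̄_{K_R}(x_k)), then V(St̄_{K_{R′}}(x_k)) = V(St̄_{K_R}(x_k)); and (b) if both x_i and x_j belong to V(St̄_{K_R}(x_k)), then V(St̄_{K_{R′}}(x_k)) = (V(St̄_{K_R}(x_k)) \ {x_i, x_j}) ∪ {z}. -/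
/-- The Dowker complex of a relation `R ⊆ X × Y`. -/
def DowkerK {X Y : Type*} (R : X → Y → Prop) : Set (Finset X) :=
  {σ | σ.Nonempty ∧ ∃ y, ∀ x ∈ σ, R x y}

/-- The vertex set of a collection of simplices: the union of its members. -/
def vertexSet {V : Type*} (K : Set (Finset V)) : Set V :=
  {v | ∃ σ ∈ K, v ∈ σ}

/-- The reduced relation `R′ ⊆ X′ × Y` obtained from `R ⊆ X × Y` by replacing the two
rows `xi` and `xj` by a new element `z` (encoded as `none`), with
`R′(z) = R(xi) ∪ R(xj)` and `R′(x) = R(x)` for `x ∈ X \ {xi, xj}`. -/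
def ReducedRel {X Y : Type*} (R : X → Y → Prop) (xi xj : X) :
    Option {x : X // x ≠ xi ∧ x ≠ xj} → Y → Prop
  | none, y => R xi y ∨ R xj y
  | some x, y => R x.1 y

/-!
A vertex `v` lies in the closed star of `x` in a Dowker complex exactly when `v` and `x` are related
to a common `y`. Merging `xi` and `xj` does not affect this condition between two old vertices,
while the new vertex shares some `y` with `xk` exactly when `xi` or `xj` does.
-/

theorem mem_vertexSet_closedStar {V : Type*} {K : Set (Finset V)} {x v : V} :
    v ∈ vertexSet (ClosedStar K x) ↔ ∃ τ ∈ K, v ∈ τ ∧ x ∈ τ := by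
  constructor
  · rintro ⟨σ, ⟨-, τ, hτ, hστ, hx⟩, hv⟩
    exact ⟨τ, hτ, hστ hv, hx⟩
  · rintro ⟨τ, hτ, hv, hx⟩
    exact ⟨τ, ⟨hτ, τ, hτ, subset_rfl, hx⟩, hv⟩

section Dowker

variable {X Y : Type*} {R : X → Y → Prop}

theorem pair_mem_dowkerK [DecidableEq X] {x x' : X} :
    {x, x'} ∈ DowkerK R ↔ ∃ y, R x y ∧ R x' y := by
  simp [DowkerK]

theorem mem_vertexSet_closedStar_dowkerK {x v : X} :
    v ∈ vertexSet (ClosedStar (DowkerK R) x) ↔ ∃ y, R v y ∧ R x y := by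
  classical
  rw [mem_vertexSet_closedStar]
  constructor
  · rintro ⟨τ, ⟨-, y, hy⟩, hv, hx⟩
    exact ⟨y, hy v hv, hy x hx⟩
  · intro h
    exact ⟨{v, x}, pair_mem_dowkerK.mpr h, by simp, by simp⟩

variable {xi xj : X} {xk : {x : X // x ≠ xi ∧ x ≠ xj}}

theorem some_mem_vertexSet_closedStar_reducedRel {x : {x : X // x ≠ xi ∧ x ≠ xj}} :
    some x ∈ vertexSet (ClosedStar (DowkerK (ReducedRel R xi xj)) (some xk)) ↔
      x.1 ∈ vertexSet (ClosedStar (DowkerK R) xk.1) := by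
  simp only [mem_vertexSet_closedStar_dowkerK, ReducedRel]

theorem none_mem_vertexSet_closedStar_reducedRel :
    none ∈ vertexSet (ClosedStar (DowkerK (ReducedRel R xi xj)) (some xk)) ↔
      xi ∈ vertexSet (ClosedStar (DowkerK R) xk.1) ∨
        xj ∈ vertexSet (ClosedStar (DowkerK R) xk.1) := by
  simp only [mem_vertexSet_closedStar_dowkerK, ReducedRel, or_and_right, exists_or]

end Dowker

theorem vertexSet_star_of_old_vertex_general {X Y : Type*} (R : X → Y → Prop) (xi xj xk : X)
    (hk : xk ≠ xi ∧ xk ≠ xj) :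
    ((xi ∉ vertexSet (ClosedStar (DowkerK R) xk) ∧
        xj ∉ vertexSet (ClosedStar (DowkerK R) xk)) →
      vertexSet (ClosedStar (DowkerK (ReducedRel R xi xj)) (some ⟨xk, hk⟩)) =
        {w | ∃ (x : X) (hx : x ≠ xi ∧ x ≠ xj), w = some ⟨x, hx⟩ ∧
          x ∈ vertexSet (ClosedStar (DowkerK R) xk)}) ∧
    ((xi ∈ vertexSet (ClosedStar (DowkerK R) xk) ∨
        xj ∈ vertexSet (ClosedStar (DowkerK R) xk)) →
      vertexSet (ClosedStar (DowkerK (ReducedRel R xi xj)) (some ⟨xk, hk⟩)) =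
        {none} ∪ {w | ∃ (x : X) (hx : x ≠ xi ∧ x ≠ xj), w = some ⟨x, hx⟩ ∧
          x ∈ vertexSet (ClosedStar (DowkerK R) xk)}) := by
  constructor
  · intro hneither
    ext (_ | ⟨x, hx⟩)
    · simp [none_mem_vertexSet_closedStar_reducedRel, hneither]
    · simp [some_mem_vertexSet_closedStar_reducedRel, hx]
  · intro heither
    ext (_ | ⟨x, hx⟩)
    · simp [none_mem_vertexSet_closedStar_reducedRel, heither]
    · simp [some_mem_vertexSet_closedStar_reducedRel, hx]

/-- Let `R ⊆ X × Y` be a relation between finite sets, `xi ≠ xj`, `R′`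
the reduced relation replacing `xi, xj` by `z`, and `xk ∈ X \ {xi, xj}` with
`R(xk) ≠ ∅`. Then:
(a) if neither `xi` nor `xj` lies in `V(St̄_{K_R}(xk))`, then
`V(St̄_{K_{R′}}(xk)) = V(St̄_{K_R}(xk))`; and
(b) if both `xi` and `xj` lie in `V(St̄_{K_R}(xk))`, then
`V(St̄_{K_{R′}}(xk)) = (V(St̄_{K_R}(xk)) \ {xi, xj}) ∪ {z}`
(removal of `xi, xj` being encoded by the subtype `{x // x ≠ xi ∧ x ≠ xj}`). -/
theorem vertexSet_star_of_old_vertex {X Y : Type*} [Fintype X] [Fintype Y]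
    (R : X → Y → Prop) (xi xj : X) (hij : xi ≠ xj)
    (xk : X) (hk : xk ≠ xi ∧ xk ≠ xj) (hRk : ∃ y, R xk y) :
    ((xi ∉ vertexSet (ClosedStar (DowkerK R) xk) ∧
        xj ∉ vertexSet (ClosedStar (DowkerK R) xk)) →
      vertexSet (ClosedStar (DowkerK (ReducedRel R xi xj)) (some ⟨xk, hk⟩)) =
        {w | ∃ (x : X) (hx : x ≠ xi ∧ x ≠ xj), w = some ⟨x, hx⟩ ∧
          x ∈ vertexSet (ClosedStar (DowkerK R) xk)}) ∧
    ((xi ∈ vertexSet (ClosedStar (DowkerK R) xk) ∧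
        xj ∈ vertexSet (ClosedStar (DowkerK R) xk)) →
      vertexSet (ClosedStar (DowkerK (ReducedRel R xi xj)) (some ⟨xk, hk⟩)) =
        {none} ∪ {w | ∃ (x : X) (hx : x ≠ xi ∧ x ≠ xj), w = some ⟨x, hx⟩ ∧
          x ∈ vertexSet (ClosedStar (DowkerK R) xk)}) := by
  have hgeneral := vertexSet_star_of_old_vertex_general R xi xj xk hk
  exact ⟨hgeneral.1, fun hboth => hgeneral.2 (Or.inl hboth.1)⟩
end
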